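/- arXiv:2111.13257 — 2 statements merged into one kernel-verified Lean document; each statement's English description precedes it below -/
import Mathlib

section
/- Let n > k ≥ 1 be integers and let 1 ≤ p < n−k be a real number; set q = p(n−k)/((n−k)−p). Let U ⊆ ℝ^k and V ⊆ ℝ^{n−k} be nonempty bounded open sets. Then there exists a constant C > 0 such that for every smooth function h : ℝ^{n−k} → ℝ with compact support contained in V, the function f on ℝ^k × ℝ^{n−k} defined by f(x,y) := h(y) satisfies (∫_{U×V} |f|^q dλ)^{1/q} ≤ C (∫_{U×V} (|f|^p + |∇f|^p) dλ)^{1/p}. Moreover the exponent q satisfies q > np/(n−p), the critical Sobolev exponent in dimension n. -/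
/-!
Since `f(x, y) = h(y)`, both integrals over `U × V` factor by Fubini as `λ(U)` times an integral
over `V`, and the operator norm of `∇f` at `(x, y)` is that of `∇h` at `y`
(`norm_fderiv_comp_snd`). As `h` is supported in `V`, the integrals over `V` are integrals over
all of `ℝ^{n-k}`, where the Gagliardo–Nirenberg–Sobolev inequality in dimension `n - k` applies
(`gns_real`, Mathlib's version rewritten with Bochner integrals). With `C₀` the constant of that
inequality, the factors `λ(U)` contribute `λ(U)^(1/q - 1/p)`, so that
`C = λ(U)^(1/q - 1/p) * (C₀ + 1)` works; the summand `1` serves only to make `C` positive.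

The comparison of exponents holds because `t ↦ p t / (t - p)` is strictly decreasing on `t > p`.
-/

open MeasureTheory

/-- Composing with the projection to the second factor does not change the norm of the
derivative: `snd` and its right inverse `inr` both have operator norm at most one. -/
lemma norm_fderiv_comp_snd {E F : Type*} [NormedAddCommGroup E] [NormedSpace ℝ E]
    [NormedAddCommGroup F] [NormedSpace ℝ F] {h : F → ℝ} (hh : Differentiable ℝ h) (z : E × F) :
    ‖fderiv ℝ (fun w : E × F => h w.2) z‖ = ‖fderiv ℝ h z.2‖ := by
  have e : fderiv ℝ (fun w : E × F => h w.2) z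
      = (fderiv ℝ h z.2).comp (ContinuousLinearMap.snd ℝ E F) :=
    ((hh z.2).hasFDerivAt.comp z hasFDerivAt_snd).fderiv
  rw [e]
  apply le_antisymm
  · refine (ContinuousLinearMap.opNorm_comp_le _ _).trans ?_
    exact mul_le_of_le_one_right (norm_nonneg _) (ContinuousLinearMap.norm_snd_le ℝ E F)
  · refine ContinuousLinearMap.opNorm_le_bound _ (norm_nonneg _) fun y => ?_
    have := ((fderiv ℝ h z.2).comp (ContinuousLinearMap.snd ℝ E F)).le_opNorm ((0 : E), y)
    simpa [Prod.norm_def] using this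

/-- Fubini for a function of the second variable on a product set. No integrability or finiteness
is needed: in the degenerate cases both sides are zero by the junk-value conventions. -/
lemma setIntegral_comp_snd {a b : ℕ} (U : Set (EuclideanSpace ℝ (Fin a)))
    (V : Set (EuclideanSpace ℝ (Fin b))) (G : EuclideanSpace ℝ (Fin b) → ℝ) :
    ∫ z in U ×ˢ V, G z.2 = (volume U).toReal * ∫ y in V, G y := by
  have := setIntegral_prod_mul (μ := (volume : Measure (EuclideanSpace ℝ (Fin a))))
    (ν := (volume : Measure (EuclideanSpace ℝ (Fin b)))) (fun _ => (1 : ℝ)) G U V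
  simpa [Measure.volume_eq_prod, Measure.real] using this

/-- The Gagliardo–Nirenberg–Sobolev inequality with Bochner integrals. -/
lemma gns_real (m : ℕ) (p q : ℝ) (hp1 : 1 ≤ p) (hpm : p < m) (hq0 : 0 < q)
    (hpq : q⁻¹ = p⁻¹ - (m : ℝ)⁻¹) :
    ∃ C : ℝ, 0 ≤ C ∧ ∀ h : EuclideanSpace ℝ (Fin m) → ℝ, ContDiff ℝ 1 h → HasCompactSupport h →
      (∫ y, |h y| ^ q) ^ (1 / q) ≤ C * (∫ y, ‖fderiv ℝ h y‖ ^ p) ^ (1 / p) := by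
  have hp0 : 0 < p := by linarith
  lift p to NNReal using hp0.le
  lift q to NNReal using hq0.le
  let μ : Measure (EuclideanSpace ℝ (Fin m)) := volume
  refine ⟨eLpNormLESNormFDerivOfEqInnerConst μ p, NNReal.coe_nonneg _, fun h hh hc => ?_⟩
  have hm : 0 < m := by exact_mod_cast hp0.trans hpm
  have key := eLpNorm_le_eLpNorm_fderiv_of_eq_inner μ hh hc (p := p) (p' := q)
    (by exact_mod_cast hp1) (by simpa using hm) (by simpa using hpq)
  have m1 : MemLp h q μ := hh.continuous.memLp_of_hasCompactSupport hc
  have m2 : MemLp (fderiv ℝ h) p μ :=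
    (hh.continuous_fderiv one_ne_zero).memLp_of_hasCompactSupport (hc.fderiv ℝ)
  rw [m1.eLpNorm_eq_integral_rpow_norm (by exact_mod_cast hq0.ne') ENNReal.coe_ne_top,
    m2.eLpNorm_eq_integral_rpow_norm (by exact_mod_cast hp0.ne') ENNReal.coe_ne_top,
    ← ENNReal.ofReal_coe_nnreal (p := eLpNormLESNormFDerivOfEqInnerConst μ p),
    ← ENNReal.ofReal_mul (NNReal.coe_nonneg _),
    ENNReal.ofReal_le_ofReal_iff (by positivity)] at key
  simpa [μ] using key

/-- Local model of the improved Sobolev embedding for basic functions: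
functions on `ℝ^k × ℝ^{n-k}` depending only on the second factor satisfy a
Sobolev inequality on `U × V` with the better exponent
`q = p(n-k)/((n-k)-p) > np/(n-p)`. -/
theorem stmt_0 (n k : ℕ) (hk : 1 ≤ k) (hkn : k < n) (p q : ℝ)
    (hp1 : 1 ≤ p) (hpnk : p < (n : ℝ) - (k : ℝ))
    (hq : q = p * ((n : ℝ) - (k : ℝ)) / (((n : ℝ) - (k : ℝ)) - p))
    (U : Set (EuclideanSpace ℝ (Fin k))) (V : Set (EuclideanSpace ℝ (Fin (n - k))))
    (hUo : IsOpen U) (hUne : U.Nonempty) (hUb : Bornology.IsBounded U)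
    (hVo : IsOpen V) (hVne : V.Nonempty) (hVb : Bornology.IsBounded V) :
    (∃ C > (0 : ℝ), ∀ h : EuclideanSpace ℝ (Fin (n - k)) → ℝ,
      ContDiff ℝ (⊤ : ℕ∞) h → HasCompactSupport h → tsupport h ⊆ V →
      (∫ z in U ×ˢ V,
          |(fun w : EuclideanSpace ℝ (Fin k) × EuclideanSpace ℝ (Fin (n - k)) => h w.2) z| ^ q) ^ (1 / q)
        ≤ C * (∫ z in U ×ˢ V,
            (|(fun w : EuclideanSpace ℝ (Fin k) × EuclideanSpace ℝ (Fin (n - k)) => h w.2) z| ^ p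
              + ‖fderiv ℝ (fun w : EuclideanSpace ℝ (Fin k) × EuclideanSpace ℝ (Fin (n - k)) => h w.2) z‖ ^ p)) ^ (1 / p))
    ∧ q > (n : ℝ) * p / ((n : ℝ) - p) := by
  have hp0 : 0 < p := by linarith
  have hk1 : (1 : ℝ) ≤ k := by exact_mod_cast hk
  have hcast : ((n - k : ℕ) : ℝ) = (n : ℝ) - k := Nat.cast_sub hkn.le
  have hd : 0 < (n : ℝ) - k - p := by linarith
  have hm : 0 < (n : ℝ) - k := by linarith
  have hq0 : 0 < q := by rw [hq]; positivity
  refine ⟨?_, ?_⟩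
  · have hqinv : q⁻¹ = p⁻¹ - ((n - k : ℕ) : ℝ)⁻¹ := by
      rw [hq, hcast]; field_simp
    obtain ⟨C₀, hC₀, hS⟩ := gns_real (n - k) p q hp1 (by rw [hcast]; exact hpnk) hq0 hqinv
    set a : ℝ := (volume U).toReal with ha
    have ha0 : 0 < a :=
      ENNReal.toReal_pos (hUo.measure_pos volume hUne).ne' hUb.measure_lt_top.ne
    refine ⟨a ^ (1 / q - 1 / p) * (C₀ + 1), by positivity, fun h hh hc hV => ?_⟩
    have hh1 : ContDiff ℝ 1 h := hh.of_le (by exact_mod_cast le_top)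
    simp only [norm_fderiv_comp_snd (hh1.differentiable one_ne_zero)]
    rw [setIntegral_comp_snd U V (fun y => |h y| ^ q),
      setIntegral_comp_snd U V (fun y => |h y| ^ p + ‖fderiv ℝ h y‖ ^ p), ← ha]
    have hout : ∀ y ∉ V, h y = 0 := fun y hy => image_eq_zero_of_notMem_tsupport fun h' => hy (hV h')
    have hout' : ∀ y ∉ V, fderiv ℝ h y = 0 := fun y hy =>
      image_eq_zero_of_notMem_tsupport fun h' => hy (hV (tsupport_fderiv_subset ℝ h'))
    rw [setIntegral_eq_integral_of_forall_compl_eq_zero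
        (fun y hy => by simp [hout y hy, hq0.ne']),
      setIntegral_eq_integral_of_forall_compl_eq_zero
        (fun y hy => by simp [hout y hy, hout' y hy, hp0.ne'])]
    have i1 : Integrable (fun y => |h y| ^ p) :=
      (hh1.continuous.abs.rpow_const fun _ => Or.inr hp0.le).integrable_of_hasCompactSupport
        (hc.norm.rpow_const hp0.ne')
    have i2 : Integrable (fun y => ‖fderiv ℝ h y‖ ^ p) :=
      ((hh1.continuous_fderiv one_ne_zero).norm.rpow_const
        fun _ => Or.inr hp0.le).integrable_of_hasCompactSupport
        ((hc.fderiv ℝ).norm.rpow_const hp0.ne')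
    have hB0 : 0 ≤ ∫ y, ‖fderiv ℝ h y‖ ^ p := integral_nonneg fun _ => by positivity
    have hA0 : 0 ≤ ∫ y, |h y| ^ q := integral_nonneg fun _ => by positivity
    have hBD : ∫ y, ‖fderiv ℝ h y‖ ^ p ≤ ∫ y, (|h y| ^ p + ‖fderiv ℝ h y‖ ^ p) :=
      integral_mono i2 (i1.add i2) fun y => le_add_of_nonneg_left (by positivity)
    have hD0 := hB0.trans hBD
    rw [Real.mul_rpow ha0.le hA0, Real.mul_rpow ha0.le hD0]
    calc a ^ (1 / q) * (∫ y, |h y| ^ q) ^ (1 / q)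
        ≤ a ^ (1 / q) * ((C₀ + 1) * (∫ y, (|h y| ^ p + ‖fderiv ℝ h y‖ ^ p)) ^ (1 / p)) := by
          gcongr
          refine (hS h hh1 hc).trans ?_
          gcongr
          linarith
      _ = a ^ (1 / q - 1 / p) * (C₀ + 1) *
          (a ^ (1 / p) * (∫ y, (|h y| ^ p + ‖fderiv ℝ h y‖ ^ p)) ^ (1 / p)) := by
          rw [Real.rpow_sub ha0]
          field_simp
  · rw [hq, gt_iff_lt, div_lt_div_iff₀ (by linarith) hd]
    nlinarith [mul_pos (mul_pos hp0 hp0) (show (0 : ℝ) < k by linarith)]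
end

section
/- Let G ⊆ O(n) be a compact subgroup acting on ℝ^n by its standard linear action. Let k : ℝ^n → ℝ be a continuous function with k(gx) = k(x) for all g ∈ G and x ∈ ℝ^n, let c₁, c₂ ∈ ℝ and c₃ ≥ 1 be constants, and let b : ℝ^n → [0,∞) be a smooth, nonnegative, compactly supported, G-invariant function. Define the linear functional ℓ(f) = 2c₁ ∫ ⟨∇b, ∇f⟩ dλ + ∫ k·b·f dλ + c₂c₃ ∫ b^{c₃−1}·f dλ on smooth compactly supported f : ℝ^n → ℝ. If ℓ(w) = 0 for every G-invariant smooth compactly supported w : ℝ^n → ℝ, then ℓ(f) = 0 for every smooth compactly supported f : ℝ^n → ℝ. -/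
/-!
The proof averages a test function `f` over the compact group `G`: let `μ` be the Haar probability
measure of `G` and put `w(x) = ∫ f(g⁻¹x) dμ(g)`. Then `w` is `G`-invariant because `μ` is left
invariant, it has compact support because `G` acts by isometries, and it is smooth by repeated
differentiation under the integral sign (`contDiff_average_nat`). So `ℓ(w) = 0` by hypothesis, and
it remains to see that `ℓ(f) = ℓ(w)`.

Each of the three terms of `ℓ(f)` is the integral of a continuous compactly supported function `H`,
namely `⟨∇b, ∇f⟩`, `k b f` or `b^{c₃-1} f`. Since `b` and `k` are invariant and `∇b` is equivariant
(`map_gradient`), the corresponding integrand for `w` at `x` is `∫ H(g⁻¹x) dμ(g)`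
(`inner_gradient_average`). By Fubini's theorem and the invariance of Lebesgue measure under
isometries, `∫∫ H(g⁻¹x) dμ(g) dx = ∫ H(x) dx` (`integral_average`).
-/

open MeasureTheory
open scoped RealInnerProductSpace

/-- The standard linear action of an `n × n` real matrix on Euclidean `n`-space. -/
noncomputable def matAct (n : ℕ) (Q : Matrix (Fin n) (Fin n) ℝ)
    (x : EuclideanSpace ℝ (Fin n)) : EuclideanSpace ℝ (Fin n) :=
  Matrix.toEuclideanLin Q x

/-- The differential at `b` of the Yamabe-type functional
`J(u) = c₁∫|∇u|² + (1/2)∫k u² + c₂∫u^{c₃}`. -/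
noncomputable def yamabeDiff (n : ℕ) (k b : EuclideanSpace ℝ (Fin n) → ℝ)
    (c₁ c₂ c₃ : ℝ) (f : EuclideanSpace ℝ (Fin n) → ℝ) : ℝ :=
  2 * c₁ * (∫ x, ⟪gradient b x, gradient f x⟫)
    + (∫ x, k x * b x * f x)
    + c₂ * c₃ * (∫ x, b x ^ (c₃ - 1) * f x)

lemma exists_radius {E : Type} [NormedAddCommGroup E] {H : E → ℝ} (hs : HasCompactSupport H) :
    ∃ R, ∀ x, x ∉ Metric.closedBall (0 : E) R → H x = 0 := by
  obtain ⟨R, hR⟩ := hs.isCompact.isBounded.subset_closedBall 0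
  exact ⟨R, fun x hx ↦ image_eq_zero_of_notMem_tsupport fun h ↦ hx (hR h)⟩

section Euclidean

variable {E G : Type} [NormedAddCommGroup E] [InnerProductSpace ℝ E] [FiniteDimensional ℝ E]

/-- The gradient of a function invariant under a linear isometry is equivariant under it. -/
lemma map_gradient {b : E → ℝ} (hb : Differentiable ℝ b) {T : E ≃ₗᵢ[ℝ] E}
    (hT : ∀ x, b (T x) = b x) (x : E) : T (gradient b x) = gradient b (T x) := by
  have h1 : (fderiv ℝ b (T x)) ∘L (T : E →L[ℝ] E) = fderiv ℝ b x := by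
    have h2 : HasFDerivAt (fun y ↦ b (T y)) ((fderiv ℝ b (T x)) ∘L (T : E →L[ℝ] E)) x :=
      (hb _).hasFDerivAt.comp x (T : E →L[ℝ] E).hasFDerivAt
    simp only [hT] at h2
    exact h2.fderiv.symm
  refine ext_inner_right ℝ fun v ↦ ?_
  obtain ⟨u, rfl⟩ := T.surjective v
  rw [T.inner_map_map, gradient, gradient, InnerProductSpace.toDual_symm_apply,
    InnerProductSpace.toDual_symm_apply, ← h1]
  rfl

lemma inner_gradient (b f : E → ℝ) (x : E) :
    ⟪gradient b x, gradient f x⟫ = fderiv ℝ f x (gradient b x) := by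
  rw [real_inner_comm, gradient.eq_def f, InnerProductSpace.toDual_symm_apply]

lemma hasCompactSupport_average [MeasurableSpace G]
    {μ : Measure G} {U : G → E ≃ₗᵢ[ℝ] E} {f : E → ℝ} (hs : HasCompactSupport f) :
    HasCompactSupport (fun x ↦ ∫ g, f (U g x) ∂μ) := by
  obtain ⟨R, hR⟩ := exists_radius hs
  refine HasCompactSupport.intro (isCompact_closedBall 0 R) fun x hx ↦ ?_
  have (g : G) : f (U g x) = 0 := hR _ (by simpa using hx)
  simp [this]

end Euclidean

section Averaging

variable {E G : Type} [NormedAddCommGroup E] [InnerProductSpace ℝ E] [FiniteDimensional ℝ E]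
  [TopologicalSpace G] [CompactSpace G] [SecondCountableTopology G]
  [MeasurableSpace G] [BorelSpace G] {μ : Measure G} [IsProbabilityMeasure μ]

/-- Differentiation under the integral sign for the averages `∫ L g (F (A g x)) dμ(g)`. -/
lemma hasFDerivAt_average {V W : Type} [NormedAddCommGroup V] [NormedSpace ℝ V]
    [NormedAddCommGroup W] [NormedSpace ℝ W] {A : G → E →L[ℝ] E} (hA : Continuous A)
    {L : G → V →L[ℝ] W} (hL : Continuous L) {F : E → V} (hF : ContDiff ℝ 1 F) (x : E) :
    HasFDerivAt (fun x ↦ ∫ g, L g (F (A g x)) ∂μ)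
      (∫ g, L g ∘L fderiv ℝ F (A g x) ∘L A g ∂μ) x := by
  have hc : Continuous fun p : E × G ↦ L p.2 (F (A p.2 p.1)) := by
    have := hF.continuous
    fun_prop
  have hc' : Continuous fun p : E × G ↦ L p.2 ∘L fderiv ℝ F (A p.2 p.1) ∘L A p.2 := by
    have h1 : Continuous (fderiv ℝ F) := hF.continuous_fderiv one_ne_zero
    have h2 : Continuous fun p : E × G ↦ fderiv ℝ F (A p.2 p.1) :=
      h1.comp (by fun_prop)
    exact (hL.comp continuous_snd).clm_comp (h2.clm_comp (hA.comp continuous_snd))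
  obtain ⟨C, hC⟩ := (((isCompact_closedBall x 1).prod (isCompact_univ (X := G))).bddAbove_image
    hc'.norm.continuousOn)
  refine hasFDerivAt_integral_of_dominated_of_fderiv_le (bound := fun _ ↦ C)
    (F' := fun x g ↦ L g ∘L fderiv ℝ F (A g x) ∘L A g)
    (Metric.closedBall_mem_nhds x one_pos) (.of_forall fun y ↦ ?_) ?_ ?_ ?_
    (integrable_const _) ?_
  · exact (hc.comp (Continuous.prodMk_right y)).aestronglyMeasurable
  · exact (hc.comp (Continuous.prodMk_right x)).integrable_of_hasCompactSupport
      (HasCompactSupport.of_compactSpace _)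
  · exact (hc'.comp (Continuous.prodMk_right x)).aestronglyMeasurable
  · exact .of_forall fun g y hy ↦ hC ⟨(y, g), ⟨hy, trivial⟩, rfl⟩
  · exact .of_forall fun g y _ ↦ (L g).hasFDerivAt.comp y
      ((hF.differentiable one_ne_zero _).hasFDerivAt.comp y (A g).hasFDerivAt)

/-- Averages `∫ L g (F (A g x)) dμ(g)` of a smooth `F` are `C^m`. The operators `L g` make the
induction on `m` work: the derivative is an average of the same shape, with `fderiv ℝ F` in place
of `F` and `T ↦ L g ∘ T ∘ A g` in place of `L g`. -/
lemma contDiff_average_nat {A : G → E →L[ℝ] E} (hA : Continuous A) (m : ℕ) :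
    ∀ {V W : Type} [NormedAddCommGroup V] [NormedSpace ℝ V] [NormedAddCommGroup W]
      [NormedSpace ℝ W] {L : G → V →L[ℝ] W} (_ : Continuous L) {F : E → V}
      (_ : ContDiff ℝ (⊤ : ℕ∞) F),
      ContDiff ℝ m (fun x ↦ ∫ g, L g (F (A g x)) ∂μ) := by
  induction m with
  | zero =>
    intro V W _ _ _ _ L hL F hF
    exact contDiff_zero.2 (continuous_iff_continuousAt.2 fun x ↦
      (hasFDerivAt_average hA hL (hF.of_le (by exact_mod_cast le_top)) x).continuousAt)
  | succ m ih =>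
    intro V W _ _ _ _ L hL F hF
    refine contDiff_succ_iff_hasFDerivAt.2 ⟨_, ?_, fun x ↦
      hasFDerivAt_average hA hL (hF.of_le (by exact_mod_cast le_top)) x⟩
    exact ih (L := fun g ↦ ContinuousLinearMap.compL ℝ E V W (L g) ∘L
        (ContinuousLinearMap.compL ℝ E E V).flip (A g))
      (by fun_prop) (F := fderiv ℝ F) (contDiff_infty_iff_fderiv.1 hF).2

lemma contDiff_average {A : G → E →L[ℝ] E} (hA : Continuous A) {f : E → ℝ}
    (hf : ContDiff ℝ (⊤ : ℕ∞) f) :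
    ContDiff ℝ (⊤ : ℕ∞) (fun x ↦ ∫ g, f (A g x) ∂μ) :=
  contDiff_infty.2 fun m ↦ contDiff_average_nat hA m
    (L := fun _ ↦ ContinuousLinearMap.id ℝ ℝ) continuous_const hf

variable {U : G → E ≃ₗᵢ[ℝ] E}

/-- Integration over `E` does not see the averaging: by Fubini, the integrals over `E` and `G` can
be exchanged, and each isometry `U g` preserves Lebesgue measure. -/
lemma integral_average [T2Space G] [MeasurableSpace E] [BorelSpace E]
    (hU : Continuous fun g ↦ (U g : E →L[ℝ] E)) {H : E → ℝ}
    (hH : Continuous H) (hs : HasCompactSupport H) :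
    ∫ x, ∫ g, H (U g x) ∂μ = ∫ x, H x := by
  have hc : Continuous fun p : E × G ↦ H (U p.2 p.1) := by
    have : Continuous fun p : E × G ↦ (U p.2 : E →L[ℝ] E) p.1 :=
      (hU.comp continuous_snd).clm_apply continuous_fst
    exact hH.comp this
  obtain ⟨R, hR⟩ := exists_radius hs
  rw [integral_integral_swap_of_hasCompactSupport (f := fun x g ↦ H (U g x)) hc]
  · have (g : G) : ∫ x, H (U g x) = ∫ x, H x :=
      (U g).measurePreserving.integral_comp (U g).toHomeomorph.measurableEmbedding H
    simp [this]
  · refine HasCompactSupport.intro ((isCompact_closedBall 0 R).prod isCompact_univ) ?_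
    rintro ⟨x, g⟩ hx
    exact hR _ (by simpa using hx)

/-- For `b` invariant under every `U g`, pairing with `∇b` commutes with averaging. -/
lemma inner_gradient_average (hU : Continuous fun g ↦ (U g : E →L[ℝ] E)) {b f : E → ℝ}
    (hb : Differentiable ℝ b) (hbU : ∀ g x, b (U g x) = b x) (hf : ContDiff ℝ 1 f) (x : E) :
    ⟪gradient b x, gradient (fun x ↦ ∫ g, f (U g x) ∂μ) x⟫
      = ∫ g, ⟪gradient b (U g x), gradient f (U g x)⟫ ∂μ := by
  have h := (hasFDerivAt_average (μ := μ) hU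
    (L := fun _ ↦ ContinuousLinearMap.id ℝ ℝ) continuous_const hf x).fderiv
  have hc : Continuous fun g ↦ ContinuousLinearMap.id ℝ ℝ ∘L
      fderiv ℝ f ((U g : E →L[ℝ] E) x) ∘L (U g : E →L[ℝ] E) := by
    have h1 : Continuous (fderiv ℝ f) := hf.continuous_fderiv one_ne_zero
    exact continuous_const.clm_comp ((h1.comp (by fun_prop)).clm_comp hU)
  rw [inner_gradient]
  refine (congrArg (fun T : E →L[ℝ] ℝ ↦ T (gradient b x)) h).trans ?_
  rw [ContinuousLinearMap.integral_apply
    (hc.integrable_of_hasCompactSupport (HasCompactSupport.of_compactSpace _))]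
  refine integral_congr_ae (.of_forall fun g ↦ ?_)
  change fderiv ℝ f (U g x) (U g (gradient b x)) = _
  rw [map_gradient hb (hbU g)]
  exact (inner_gradient b f (U g x)).symm

end Averaging

/-- The action of an orthogonal matrix, as a linear isometry of Euclidean space. -/
noncomputable def orthIsometry (n : ℕ) (Q : Matrix.orthogonalGroup (Fin n) ℝ) :
    EuclideanSpace ℝ (Fin n) ≃ₗᵢ[ℝ] EuclideanSpace ℝ (Fin n) :=
  Unitary.linearIsometryEquiv
    ⟨Matrix.toEuclideanCLM (𝕜 := ℝ) (Q : Matrix (Fin n) (Fin n) ℝ), Unitary.map_mem _ Q.2⟩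

lemma orthIsometry_apply (n : ℕ) (Q : Matrix.orthogonalGroup (Fin n) ℝ)
    (x : EuclideanSpace ℝ (Fin n)) :
    orthIsometry n Q x = matAct n (Q : Matrix (Fin n) (Fin n) ℝ) x := rfl

lemma orthIsometry_mul (n : ℕ) (P Q : Matrix.orthogonalGroup (Fin n) ℝ)
    (x : EuclideanSpace ℝ (Fin n)) :
    orthIsometry n (P * Q) x = orthIsometry n P (orthIsometry n Q x) := by
  change Matrix.toEuclideanCLM (𝕜 := ℝ)
    ((P : Matrix (Fin n) (Fin n) ℝ) * (Q : Matrix (Fin n) (Fin n) ℝ)) x = _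
  rw [map_mul]
  rfl

lemma continuous_orthIsometry (n : ℕ) :
    Continuous fun Q : Matrix.orthogonalGroup (Fin n) ℝ ↦
      (orthIsometry n Q : EuclideanSpace ℝ (Fin n) →L[ℝ] EuclideanSpace ℝ (Fin n)) := by
  have h : Continuous fun M : Matrix (Fin n) (Fin n) ℝ ↦ Matrix.toEuclideanCLM (𝕜 := ℝ) M :=
    LinearMap.continuous_of_finiteDimensional
      (Matrix.toEuclideanCLM (𝕜 := ℝ) (n := Fin n)).toAlgEquiv.toLinearMap
  exact h.comp continuous_subtype_val

/-- Principle of symmetric criticality for the Yamabe functional, Euclidean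
homogeneous instance: if the differential `ℓ = dJ(b)` of the Yamabe-type functional
at a `G`-invariant basic function `b` vanishes on all `G`-invariant test functions,
then it vanishes on all test functions. -/
theorem stmt_8 (n : ℕ) (G : Subgroup (Matrix.orthogonalGroup (Fin n) ℝ))
    (hGc : IsCompact (G : Set (Matrix.orthogonalGroup (Fin n) ℝ)))
    (k : EuclideanSpace ℝ (Fin n) → ℝ) (hkcont : Continuous k)
    (hkinv : ∀ g ∈ G, ∀ x, k (matAct n (g : Matrix (Fin n) (Fin n) ℝ) x) = k x)
    (c₁ c₂ c₃ : ℝ) (hc₃ : 1 ≤ c₃)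
    (b : EuclideanSpace ℝ (Fin n) → ℝ) (hb : ContDiff ℝ (⊤ : ℕ∞) b)
    (hbnn : ∀ x, 0 ≤ b x) (hbcs : HasCompactSupport b)
    (hbinv : ∀ g ∈ G, ∀ x, b (matAct n (g : Matrix (Fin n) (Fin n) ℝ) x) = b x)
    (hbasic : ∀ w : EuclideanSpace ℝ (Fin n) → ℝ, ContDiff ℝ (⊤ : ℕ∞) w → HasCompactSupport w →
      (∀ g ∈ G, ∀ x, w (matAct n (g : Matrix (Fin n) (Fin n) ℝ) x) = w x) →
      yamabeDiff n k b c₁ c₂ c₃ w = 0) :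
    ∀ f : EuclideanSpace ℝ (Fin n) → ℝ, ContDiff ℝ (⊤ : ℕ∞) f → HasCompactSupport f →
      yamabeDiff n k b c₁ c₂ c₃ f = 0 := by
  intro f hf hfs
  have : CompactSpace G := isCompact_iff_compactSpace.1 hGc
  have : SecondCountableTopology (Matrix (Fin n) (Fin n) ℝ) :=
    inferInstanceAs (SecondCountableTopology (Fin n → Fin n → ℝ))
  have : SecondCountableTopology (Matrix.orthogonalGroup (Fin n) ℝ) :=
    TopologicalSpace.Subtype.secondCountableTopology _
  have : SecondCountableTopology G := TopologicalSpace.Subtype.secondCountableTopology _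
  let _ : MeasurableSpace G := borel G
  have : BorelSpace G := ⟨rfl⟩
  let μ : Measure G := Measure.haarMeasure ⊤
  have : IsProbabilityMeasure μ := ⟨Measure.haarMeasure_self (K₀ := ⊤)⟩
  -- The inverse makes left invariance of `μ` the property that gives invariance of the average.
  let U : G → EuclideanSpace ℝ (Fin n) ≃ₗᵢ[ℝ] EuclideanSpace ℝ (Fin n) :=
    fun g ↦ orthIsometry n (g⁻¹ : G)
  have hU : Continuous fun g ↦
      (U g : EuclideanSpace ℝ (Fin n) →L[ℝ] EuclideanSpace ℝ (Fin n)) :=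
    (continuous_orthIsometry n).comp (continuous_subtype_val.comp continuous_inv)
  have hbU (g : G) (x) : b (U g x) = b x := hbinv _ (g⁻¹ : G).2 x
  have hkU (g : G) (x) : k (U g x) = k x := hkinv _ (g⁻¹ : G).2 x
  have hb1 : ContDiff ℝ 1 b := hb.of_le (by exact_mod_cast le_top)
  have hf1 : ContDiff ℝ 1 f := hf.of_le (by exact_mod_cast le_top)
  have key := hbasic (fun x ↦ ∫ g, f (U g x) ∂μ) (contDiff_average hU hf)
    (hasCompactSupport_average hfs) fun g hg x ↦ by
      rw [← integral_mul_left_eq_self (fun h : G ↦ f (U h x)) ((⟨g, hg⟩ : G)⁻¹)]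
      refine integral_congr_ae (.of_forall fun h ↦ congrArg f ?_)
      change orthIsometry n _ (orthIsometry n g x) = orthIsometry n _ x
      rw [← orthIsometry_mul]
      simp
  rw [← key]
  have hrp : Continuous fun x ↦ b x ^ (c₃ - 1) :=
    hb.continuous.rpow_const fun _ ↦ .inr (sub_nonneg.2 hc₃)
  have hgrad {u : EuclideanSpace ℝ (Fin n) → ℝ} (hu : ContDiff ℝ 1 u) :
      Continuous (gradient u) :=
    (LinearIsometryEquiv.continuous _).comp (hu.continuous_fderiv one_ne_zero)
  have h1 := integral_average (μ := μ) hU (H := fun x ↦ ⟪gradient b x, gradient f x⟫)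
    ((hgrad hb1).inner (hgrad hf1)) (by
      refine (hfs.fderiv ℝ).mono fun x hx h0 ↦ hx ?_
      change ⟪gradient b x, gradient f x⟫ = 0
      rw [inner_gradient, h0]
      rfl)
  have h2 := integral_average (μ := μ) hU (H := fun x ↦ k x * b x * f x)
    ((hkcont.mul hb.continuous).mul hf.continuous) hfs.mul_left
  have h3 := integral_average (μ := μ) hU (H := fun x ↦ b x ^ (c₃ - 1) * f x)
    (hrp.mul hf.continuous) hfs.mul_left
  simp only [hkU, hbU, integral_const_mul] at h2 h3
  simp only [yamabeDiff, ← h1, ← h2, ← h3,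
    inner_gradient_average hU (hb1.differentiable one_ne_zero) hbU hf1]
end
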